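/- arXiv:1312.0986 — 3 statements merged into one kernel-verified Lean document; each statement's English description precedes it below -/
import Mathlib

section
/- Let c : ℝⁿ → (0,∞) be locally bounded and measurable and suppose there exists a smooth function b : ℝⁿ → ℝ with all first-order partial derivatives bounded, and β ∈ ℝⁿ, such that c(x) = e^{β·x + b(x)} for all x. Then for every ε > 0 there are constants a_ε, A_ε > 0 such that a_ε e^{β·t − ε|t|} ≤ c(t+h)/c(h) ≤ A_ε e^{β·t + ε|t|} for all t, h ∈ ℝⁿ, provided additionally that ∇b(x) → 0 as |x| → ∞. -/
open MeasureTheory Real RealInnerProductSpace Filter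

/-- Sublinear oscillation of a function whose gradient vanishes at infinity. -/
lemma osc_bound {n : ℕ} (b : EuclideanSpace ℝ (Fin n) → ℝ) (hd : Differentiable ℝ b)
    (hgrad : Tendsto (fun x => fderiv ℝ b x) (cocompact (EuclideanSpace ℝ (Fin n))) (nhds 0))
    (ε : ℝ) (hε : 0 < ε) : ∃ C, ∀ x y, |b x - b y| ≤ C + ε * ‖x - y‖ := by
  obtain ⟨R, hR0, hR⟩ : ∃ R > (0:ℝ), ∀ x, R ≤ ‖x‖ → ‖fderiv ℝ b x‖ ≤ ε := by
    have h1 : ∀ᶠ x in cocompact (EuclideanSpace ℝ (Fin n)), ‖fderiv ℝ b x‖ ≤ ε := by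
      have h2 := hgrad.norm
      rw [norm_zero] at h2
      exact (h2.eventually (gt_mem_nhds hε)).mono fun x hx => le_of_lt hx
    rw [← Metric.cobounded_eq_cocompact, ← comap_norm_atTop, eventually_comap,
      eventually_atTop] at h1
    obtain ⟨R, hR⟩ := h1
    exact ⟨max R 1, by positivity, fun x hx => hR ‖x‖ ((le_max_left _ _).trans hx) x rfl⟩
  have hseg : ∀ x y, (∀ z ∈ segment ℝ x y, R ≤ ‖z‖) → |b y - b x| ≤ ε * ‖y - x‖ := by
    intro x y hz
    exact (convex_segment x y).norm_image_sub_le_of_norm_fderiv_le (𝕜 := ℝ)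
      (fun z _ => hd z) (fun z h => hR z (hz z h))
      (left_mem_segment ℝ x y) (right_mem_segment ℝ x y)
  obtain ⟨K, hK⟩ := (isCompact_closedBall (0 : EuclideanSpace ℝ (Fin n)) R).exists_bound_of_continuousOn
    (f := fun x => b x - b 0) (hd.continuous.sub continuous_const).continuousOn
  have hK' : ∀ x, ‖x‖ ≤ R → |b x - b 0| ≤ K := fun x hx => hK x (by simpa using hx)
  have hK0 : 0 ≤ K := (abs_nonneg _).trans (hK' 0 (by simpa using hR0.le))
  have h0 : ∀ x, |b x - b 0| ≤ K + ε * ‖x‖ := by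
    intro x
    rcases le_total ‖x‖ R with hx | hx
    · have := hK' x hx
      have : 0 ≤ ε * ‖x‖ := by positivity
      linarith
    · have hxp : 0 < ‖x‖ := hR0.trans_le hx
      have hr : 0 < R / ‖x‖ := by positivity
      have hr1 : R / ‖x‖ ≤ 1 := (div_le_one hxp).2 hx
      have hy : ‖(R / ‖x‖) • x‖ = R := by
        rw [norm_smul, Real.norm_of_nonneg hr.le]; field_simp
      have h1 := hK' _ hy.le
      have h2 := hseg ((R / ‖x‖) • x) x (by
        rintro z ⟨p, q, hp, hq, hpq, rfl⟩
        rw [smul_smul, ← add_smul, norm_smul, Real.norm_of_nonneg (by positivity)]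
        have : R / ‖x‖ ≤ p * (R / ‖x‖) + q := by
          have : q = 1 - p := by linarith
          subst this
          nlinarith
        calc R = R / ‖x‖ * ‖x‖ := by field_simp
          _ ≤ _ := by gcongr)
      have h3 : ‖x - (R / ‖x‖) • x‖ ≤ ‖x‖ := by
        have : x - (R / ‖x‖) • x = (1 - R / ‖x‖) • x := by rw [sub_smul, one_smul]
        rw [this, norm_smul, Real.norm_of_nonneg (by linarith)]
        nlinarith
      have h4 := mul_le_mul_of_nonneg_left h3 hε.le
      have h5 := abs_sub_le (b x) (b ((R / ‖x‖) • x)) (b 0)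
      linarith
  refine ⟨2 * K + 2 * (ε * R), fun x y => ?_⟩
  by_cases hz : ∀ z ∈ segment ℝ y x, R ≤ ‖z‖
  · have := hseg y x hz
    have : 0 ≤ ε * R := by positivity
    linarith
  · push Not at hz
    obtain ⟨z, hz, hzR⟩ := hz
    have hdist := dist_add_dist_of_mem_segment hz
    rw [dist_eq_norm, dist_eq_norm, dist_eq_norm, norm_sub_rev z x, norm_sub_rev y x] at hdist
    have hx : ‖x‖ ≤ ‖x - z‖ + ‖z‖ := by simpa using norm_add_le (x - z) z
    have hy : ‖y‖ ≤ ‖y - z‖ + ‖z‖ := by simpa using norm_add_le (y - z) z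
    have h1 : ε * (‖x‖ + ‖y‖) ≤ ε * (‖x - y‖ + 2 * R) :=
      mul_le_mul_of_nonneg_left (by linarith) hε.le
    have h2 := abs_sub_le (b x) (b 0) (b y)
    rw [abs_sub_comm (b 0)] at h2
    have := h0 x
    have := h0 y
    linarith

/-- Potter-type estimates: if `c(x) = exp(β·x + b(x))` with `b` smooth, `∇b` bounded and
`∇b(x) → 0` as `|x| → ∞`, then for every `ε > 0` there are `a_ε, A_ε > 0` with
`a_ε e^{β·t - ε|t|} ≤ c(t+h)/c(h) ≤ A_ε e^{β·t + ε|t|}` for all `t, h`. -/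
theorem potter_estimates {n : ℕ} (c b : EuclideanSpace ℝ (Fin n) → ℝ)
    (β : EuclideanSpace ℝ (Fin n))
    (hcpos : ∀ x, 0 < c x) (hcloc : ∀ K : Set (EuclideanSpace ℝ (Fin n)), IsCompact K →
      ∃ M, ∀ x ∈ K, c x ≤ M) (hmeas : Measurable c)
    (hb : ContDiff ℝ (⊤ : ℕ∞) b)
    (hbdd : ∃ M, ∀ x, ‖fderiv ℝ b x‖ ≤ M)
    (hgrad : Tendsto (fun x => fderiv ℝ b x) (cocompact (EuclideanSpace ℝ (Fin n))) (nhds 0))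
    (hc : ∀ x, c x = Real.exp (⟪β, x⟫ + b x)) :
    ∀ ε > (0 : ℝ), ∃ aε > (0 : ℝ), ∃ Aε > (0 : ℝ), ∀ t h : EuclideanSpace ℝ (Fin n),
      aε * Real.exp (⟪β, t⟫ - ε * ‖t‖) ≤ c (t + h) / c h ∧
      c (t + h) / c h ≤ Aε * Real.exp (⟪β, t⟫ + ε * ‖t‖) := by
  intro ε hε
  obtain ⟨C, hC⟩ := osc_bound b (hb.differentiable (by simp)) hgrad ε hε
  refine ⟨Real.exp (-C), Real.exp_pos _, Real.exp C, Real.exp_pos _, fun t h => ?_⟩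
  have h1 := abs_le.1 (hC (t + h) h)
  rw [add_sub_cancel_right] at h1
  rw [hc, hc, ← Real.exp_sub, ← Real.exp_add, ← Real.exp_add, Real.exp_le_exp, Real.exp_le_exp,
    inner_add_right]
  constructor <;> linarith
end

section
/- Let f̃ : (0,∞) → ℝ be non-decreasing and nonnegative, let b : ℝ → (0,∞), r ≥ 0, and C ≥ 0. Suppose that for every φ ∈ C_c^∞(ℝ), lim_{h→∞} (1/b(h)) ∫ f̃(t+h)φ(t)dt = C ∫ e^{rt}φ(t)dt. Assume also b(t+h)/b(h) → e^{rt} as h → ∞ uniformly for t in compact sets. Then lim_{h→∞} f̃(h)/b(h) = C. -/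
open MeasureTheory Filter

lemma mono_avg_bounds (g φ : ℝ → ℝ) (a c : ℝ) (hac : a ≤ c) (hg : MonotoneOn g (Set.Icc a c))
    (hφc : Continuous φ) (hφ0 : ∀ t, 0 ≤ φ t) (hsupp : Function.support φ ⊆ Set.Icc a c)
    (hint : ∫ t, φ t = 1) :
    g a ≤ ∫ t, g t * φ t ∧ ∫ t, g t * φ t ≤ g c := by
  have h1 : IntegrableOn (fun t => g t * φ t) (Set.Icc a c) :=
    (hg.integrableOn_isCompact isCompact_Icc).mul_continuousOn hφc.continuousOn isCompact_Icc
  have h2 : Integrable (fun t => g t * φ t) := by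
    refine (integrableOn_iff_integrable_of_support_subset ?_).1 h1
    exact (Function.support_mul_subset_right g φ).trans hsupp
  have hφi : Integrable φ := by
    by_contra h
    rw [integral_undef h] at hint
    norm_num at hint
  have key : ∀ t, g a * φ t ≤ g t * φ t ∧ g t * φ t ≤ g c * φ t := by
    intro t
    by_cases ht : t ∈ Set.Icc a c
    · exact ⟨mul_le_mul_of_nonneg_right (hg ⟨le_rfl, hac⟩ ht ht.1) (hφ0 t),
        mul_le_mul_of_nonneg_right (hg ht ⟨hac, le_rfl⟩ ht.2) (hφ0 t)⟩
    · have : φ t = 0 := by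
        by_contra h
        exact ht (hsupp h)
      simp [this]
  constructor
  · have := integral_mono (hφi.const_mul (g a)) h2 (fun t => (key t).1)
    rwa [integral_const_mul, hint, mul_one] at this
  · have := integral_mono h2 (hφi.const_mul (g c)) (fun t => (key t).2)
    rwa [integral_const_mul, hint, mul_one] at this

lemma exists_test (a c : ℝ) (hac : a < c) : ∃ φ : ℝ → ℝ, ContDiff ℝ (⊤ : ℕ∞) φ ∧
    HasCompactSupport φ ∧ (∀ t, 0 ≤ φ t) ∧ Function.support φ ⊆ Set.Icc a c ∧
    ∫ t, φ t = 1 := by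
  let B : ContDiffBump ((a + c) / 2) := ⟨(c - a) / 4, (c - a) / 2, by linarith, by linarith⟩
  refine ⟨B.normed volume, B.contDiff_normed, B.hasCompactSupport_normed,
    fun t => B.nonneg_normed t, ?_, B.integral_normed⟩
  rw [B.support_normed_eq, Real.ball_eq_Ioo]
  intro t ht
  have h1 : (a + c) / 2 - (c - a) / 2 < t := ht.1
  have h2 : t < (a + c) / 2 + (c - a) / 2 := ht.2
  constructor <;> linarith

/-- Monotone-density Tauberian step: if a nonnegative non-decreasing function `f` on `(0,∞)`
satisfies `∫ f(t+h) φ(t) dt ∼ C b(h) ∫ e^{rt} φ(t) dt` as `h → ∞` for all test functions `φ`,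
and `b(t+h)/b(h) → e^{rt}` uniformly on compacts, then `f(h)/b(h) → C`. -/
theorem monotone_tauberian (f : ℝ → ℝ) (b : ℝ → ℝ) (r C : ℝ)
    (hr : 0 ≤ r) (hC : 0 ≤ C)
    (hmono : MonotoneOn f (Set.Ioi (0 : ℝ)))
    (hnonneg : ∀ t ∈ Set.Ioi (0 : ℝ), 0 ≤ f t)
    (hbpos : ∀ t, 0 < b t)
    (hlim : ∀ φ : ℝ → ℝ, ContDiff ℝ (⊤ : ℕ∞) φ → HasCompactSupport φ →
      Tendsto (fun h => (∫ t, f (t + h) * φ t) / b h) atTop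
        (nhds (C * ∫ t, Real.exp (r * t) * φ t)))
    (hbreg : ∀ K : Set ℝ, IsCompact K → ∀ ε > (0 : ℝ),
      ∃ R : ℝ, ∀ h ≥ R, ∀ t ∈ K, |b (t + h) / b h - Real.exp (r * t)| < ε) :
    Tendsto (fun h => f h / b h) atTop (nhds C) := by
  have main : ∀ a c : ℝ, a < c → ∃ (F : ℝ → ℝ) (L : ℝ), Tendsto F atTop (nhds L) ∧
      C * Real.exp (r * a) ≤ L ∧ L ≤ C * Real.exp (r * c) ∧
      ∀ h, -a < h → f (a + h) / b h ≤ F h ∧ F h ≤ f (c + h) / b h := by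
    intro a c hac
    obtain ⟨φ, h1, h2, h3, h4, h5⟩ := exists_test a c hac
    have he := mono_avg_bounds (fun t => Real.exp (r * t)) φ a c hac.le
      (fun x _ y _ hxy => Real.exp_le_exp.2 (mul_le_mul_of_nonneg_left hxy hr))
      h1.continuous h3 h4 h5
    refine ⟨_, _, hlim φ h1 h2, mul_le_mul_of_nonneg_left he.1 hC,
      mul_le_mul_of_nonneg_left he.2 hC, ?_⟩
    intro h hh
    have hf := mono_avg_bounds (fun t => f (t + h)) φ a c hac.le
      (fun x hx y hy hxy => hmono (by have := hx.1; simp only [Set.mem_Ioi]; linarith)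
        (by have := hy.1; simp only [Set.mem_Ioi]; linarith) (by linarith))
      h1.continuous h3 h4 h5
    exact ⟨div_le_div_of_nonneg_right hf.1 (hbpos h).le,
      div_le_div_of_nonneg_right hf.2 (hbpos h).le⟩
  have hcont : ∀ s : ℝ, Tendsto (fun ε : ℝ => C * Real.exp (r * (s * ε)))
      (nhdsWithin 0 (Set.Ioi 0)) (nhds C) := by
    intro s
    have : Continuous (fun ε : ℝ => C * Real.exp (r * (s * ε))) := by fun_prop
    have h := this.tendsto 0
    simp only [mul_zero, Real.exp_zero, mul_one] at h
    exact h.mono_left nhdsWithin_le_nhds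
  rw [tendsto_order]
  constructor
  · intro u hu
    obtain ⟨ε, h1, h2⟩ := (((hcont (-1)).eventually (lt_mem_nhds hu)).and
      self_mem_nhdsWithin).exists
    have hε : 0 < ε := h2
    obtain ⟨F, L, hF, hL, -, hb⟩ := main (-1 * ε) 0 (by linarith)
    filter_upwards [hF.eventually (lt_mem_nhds (h1.trans_le hL)), eventually_gt_atTop ε]
      with h h3 h4
    have := (hb h (by linarith)).2
    rw [zero_add] at this
    exact h3.trans_le this
  · intro u hu
    obtain ⟨ε, h1, h2⟩ := (((hcont 1).eventually (gt_mem_nhds hu)).and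
      self_mem_nhdsWithin).exists
    have hε : 0 < ε := h2
    obtain ⟨F, L, hF, -, hL, hb⟩ := main 0 (1 * ε) (by linarith)
    filter_upwards [hF.eventually (gt_mem_nhds (hL.trans_lt h1)), eventually_gt_atTop 0]
      with h h3 h4
    have := (hb h (by linarith)).1
    rw [zero_add] at this
    exact this.trans_lt h3
end

section
/- For φ, ψ smooth rapidly exponentially decreasing functions on ℝⁿ (i.e., for all k, sup_{t,|α|≤k} e^{k|t|}|φ^{(α)}(t)| < ∞, and similarly for ψ), the short-time Fourier transform V_ψφ(x,ξ) satisfies: for every k ∈ ℕ there is C_k such that |V_ψφ(x,ξ)| ≤ C_k e^{−k|x|} (1+|ξ|)^{−k} for all (x,ξ) ∈ ℝ²ⁿ. -/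
open MeasureTheory Real RealInnerProductSpace

/-- The short-time Fourier transform `V_ψ f (x, ξ) = ∫ f(t) conj(ψ(t-x)) e^{-2πi ξ·t} dt`. -/
noncomputable def STFT {n : ℕ} (f ψ : EuclideanSpace ℝ (Fin n) → ℂ)
    (x ξ : EuclideanSpace ℝ (Fin n)) : ℂ :=
  ∫ t, f t * (starRingEnd ℂ) (ψ (t - x)) *
    Complex.exp ((-(2 * Real.pi * ⟪ξ, t⟫) : ℝ) * Complex.I)

open scoped FourierTransform in
lemma STFT_eq_fourier {n : ℕ} (φ ψ : EuclideanSpace ℝ (Fin n) → ℂ)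
    (x ξ : EuclideanSpace ℝ (Fin n)) :
    STFT φ ψ x ξ = 𝓕 (fun t => φ t * (starRingEnd ℂ) (ψ (t - x))) ξ := by
  rw [Real.fourier_eq', STFT]
  congr 1
  ext t
  rw [smul_eq_mul, mul_comm, real_inner_comm]
  congr 2
  push_cast
  ring

lemma deriv_prod_bound {n : ℕ} (φ ψ : EuclideanSpace ℝ (Fin n) → ℂ)
    (hφsm : ContDiff ℝ (⊤ : ℕ∞) φ) (hψsm : ContDiff ℝ (⊤ : ℕ∞) ψ) (k : ℕ) (A B : ℝ)
    (hA : ∀ t : EuclideanSpace ℝ (Fin n), ∀ i ≤ k + (n + 1),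
      ‖iteratedFDeriv ℝ i φ t‖ ≤ A * Real.exp (-((k + (n + 1) : ℕ) : ℝ) * ‖t‖))
    (hB : ∀ t : EuclideanSpace ℝ (Fin n), ∀ i ≤ k,
      ‖iteratedFDeriv ℝ i ψ t‖ ≤ B * Real.exp (-(k : ℝ) * ‖t‖))
    (hA0 : 0 ≤ A) (hB0 : 0 ≤ B)
    (x t : EuclideanSpace ℝ (Fin n)) (m : ℕ) (hm : m ≤ k) :
    ‖iteratedFDeriv ℝ m (fun t => φ t * (starRingEnd ℂ) (ψ (t - x))) t‖ ≤
      2 ^ k * A * B * Real.exp (-(k : ℝ) * ‖x‖) * (1 + ‖t‖) ^ (-((n : ℝ) + 1)) := by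
  have hg : ContDiff ℝ (⊤ : ℕ∞) (fun t => (starRingEnd ℂ) (ψ (t - x))) :=
    Complex.conjLIE.contDiff.comp (hψsm.comp (contDiff_id.sub contDiff_const))
  have hgn : ∀ j, ‖iteratedFDeriv ℝ j (fun t => (starRingEnd ℂ) (ψ (t - x))) t‖
      = ‖iteratedFDeriv ℝ j ψ (t - x)‖ := by
    intro j
    rw [← iteratedFDeriv_comp_sub]
    exact Complex.conjLIE.norm_iteratedFDeriv_comp_left (fun t => ψ (t - x)) t j
  have hexp : Real.exp (-((k + (n + 1) : ℕ) : ℝ) * ‖t‖) * Real.exp (-(k : ℝ) * ‖t - x‖) ≤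
      Real.exp (-(k : ℝ) * ‖x‖) * (1 + ‖t‖) ^ (-((n : ℝ) + 1)) := by
    have h1 : Real.exp (-((n : ℝ) + 1) * ‖t‖) ≤ (1 + ‖t‖) ^ (-((n : ℝ) + 1)) := by
      have hp : 0 < 1 + ‖t‖ := by positivity
      rw [Real.rpow_def_of_pos hp]
      apply Real.exp_le_exp.2
      have := Real.log_le_sub_one_of_pos hp
      have hn : (0 : ℝ) ≤ n := n.cast_nonneg
      nlinarith
    refine le_trans ?_ (mul_le_mul_of_nonneg_left h1 (Real.exp_pos _).le)
    rw [← Real.exp_add, ← Real.exp_add]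
    apply Real.exp_le_exp.2
    have h2 : ‖x‖ ≤ ‖t‖ + ‖t - x‖ := by
      have := norm_sub_le t (t - x)
      simpa using this
    have hk : (0 : ℝ) ≤ k := k.cast_nonneg
    push_cast
    nlinarith [mul_le_mul_of_nonneg_left h2 hk]
  refine (norm_iteratedFDeriv_mul_le hφsm hg t (n := m) (by exact_mod_cast le_top)).trans ?_
  have : ∀ i ∈ Finset.range (m + 1), (m.choose i : ℝ) * ‖iteratedFDeriv ℝ i φ t‖ *
      ‖iteratedFDeriv ℝ (m - i) (fun t => (starRingEnd ℂ) (ψ (t - x))) t‖ ≤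
      (m.choose i : ℝ) * (A * B *
        (Real.exp (-(k : ℝ) * ‖x‖) * (1 + ‖t‖) ^ (-((n : ℝ) + 1)))) := by
    intro i hi
    have hi' := Finset.mem_range.1 hi
    rw [hgn, mul_assoc]
    apply mul_le_mul_of_nonneg_left _ (Nat.cast_nonneg _)
    calc _ ≤ (A * Real.exp (-((k + (n + 1) : ℕ) : ℝ) * ‖t‖)) *
          (B * Real.exp (-(k : ℝ) * ‖t - x‖)) :=
          mul_le_mul (hA t i (by omega)) (hB (t - x) (m - i) (by omega)) (norm_nonneg _)
            (by positivity)
      _ = A * B * (Real.exp (-((k + (n + 1) : ℕ) : ℝ) * ‖t‖) *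
          Real.exp (-(k : ℝ) * ‖t - x‖)) := by ring
      _ ≤ _ := mul_le_mul_of_nonneg_left hexp (by positivity)
  refine (Finset.sum_le_sum this).trans ?_
  rw [← Finset.sum_mul]
  have h3 : (∑ i ∈ Finset.range (m + 1), (m.choose i : ℝ)) = 2 ^ m := by
    exact_mod_cast Nat.sum_range_choose m
  rw [h3]
  have h4 : (2 : ℝ) ^ m ≤ 2 ^ k := pow_le_pow_right₀ (by norm_num) hm
  calc _ ≤ (2 : ℝ) ^ k * (A * B *
        (Real.exp (-(k : ℝ) * ‖x‖) * (1 + ‖t‖) ^ (-((n : ℝ) + 1)))) :=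
        mul_le_mul_of_nonneg_right h4 (by positivity)
    _ = _ := by ring

/-- For `φ, ψ` smooth exponentially rapidly decreasing functions (in `𝒦₁(ℝⁿ)`),
the STFT `V_ψφ` decays exponentially in `x` and polynomially in `ξ` of any order. -/
theorem stft_K1_decay {n : ℕ} (φ ψ : EuclideanSpace ℝ (Fin n) → ℂ)
    (hφsm : ContDiff ℝ (⊤ : ℕ∞) φ) (hψsm : ContDiff ℝ (⊤ : ℕ∞) ψ)
    (hφ : ∀ k : ℕ, ∃ C : ℝ, ∀ t : EuclideanSpace ℝ (Fin n), ∀ i ≤ k,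
      ‖iteratedFDeriv ℝ i φ t‖ ≤ C * Real.exp (-(k : ℝ) * ‖t‖))
    (hψ : ∀ k : ℕ, ∃ C : ℝ, ∀ t : EuclideanSpace ℝ (Fin n), ∀ i ≤ k,
      ‖iteratedFDeriv ℝ i ψ t‖ ≤ C * Real.exp (-(k : ℝ) * ‖t‖)) :
    ∀ k : ℕ, ∃ C : ℝ, ∀ x ξ : EuclideanSpace ℝ (Fin n),
      ‖STFT φ ψ x ξ‖ ≤ C * Real.exp (-(k : ℝ) * ‖x‖) / (1 + ‖ξ‖) ^ k := by
  intro k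
  obtain ⟨A, hA⟩ := hφ (k + (n + 1))
  obtain ⟨B, hB⟩ := hψ k
  have hA0 : 0 ≤ A := by
    have := (norm_nonneg _).trans (hA 0 0 (Nat.zero_le _))
    simpa using this
  have hB0 : 0 ≤ B := by
    have := (norm_nonneg _).trans (hB 0 0 (Nat.zero_le _))
    simpa using this
  have hG : Integrable (fun t : EuclideanSpace ℝ (Fin n) => (1 + ‖t‖) ^ (-((n : ℝ) + 1))) :=
    integrable_one_add_norm (by simp)
  set J : ℝ := ∫ t : EuclideanSpace ℝ (Fin n), (1 + ‖t‖) ^ (-((n : ℝ) + 1)) with hJ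
  have hJ0 : 0 ≤ J := integral_nonneg fun t => by positivity
  refine ⟨2 ^ k * (2 * (2 ^ k * ((k + 1) * (2 ^ k * A * B * J)))), fun x ξ => ?_⟩
  rw [STFT_eq_fourier]
  set f : EuclideanSpace ℝ (Fin n) → ℂ := fun t => φ t * (starRingEnd ℂ) (ψ (t - x)) with hf
  have hfs : ContDiff ℝ (⊤ : ℕ∞) f :=
    hφsm.mul (Complex.conjLIE.contDiff.comp (hψsm.comp (contDiff_id.sub contDiff_const)))
  set E := Real.exp (-(k : ℝ) * ‖x‖) with hE
  have hE0 : 0 < E := Real.exp_pos _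
  have hb : ∀ m ≤ k, ∀ t, ‖iteratedFDeriv ℝ m f t‖ ≤
      2 ^ k * A * B * E * (1 + ‖t‖) ^ (-((n : ℝ) + 1)) := fun m hm t =>
    deriv_prod_bound φ ψ hφsm hψsm k A B hA hB hA0 hB0 x t m hm
  have hint : ∀ m ≤ k, Integrable (fun t => ‖iteratedFDeriv ℝ m f t‖) := by
    intro m hm
    refine (hG.const_mul (2 ^ k * A * B * E)).mono'
      ((hfs.continuous_iteratedFDeriv (by exact_mod_cast le_top)).norm.aestronglyMeasurable) ?_
    filter_upwards with t
    rw [norm_norm]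
    exact hb m hm t
  have hI : ∀ m ≤ k, ∫ t, ‖iteratedFDeriv ℝ m f t‖ ≤ 2 ^ k * A * B * E * J := by
    intro m hm
    rw [hJ, ← integral_const_mul]
    exact integral_mono (hint m hm) (hG.const_mul _) (hb m hm)
  have key : ∀ m ≤ k, ‖ξ‖ ^ m * ‖FourierTransform.fourier f ξ‖ ≤
      2 ^ k * ((k + 1) * (2 ^ k * A * B * E * J)) := by
    intro m hm
    have h := Real.pow_mul_norm_iteratedFDeriv_fourier_le (f := f) (K := 0) (N := (k : ℕ∞))
      (hfs.of_le (by exact_mod_cast le_top)) (by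
        intro a b ha hb'
        have ha' : a = 0 := by simpa using ha
        subst ha'
        simpa using hint b (by exact_mod_cast hb')) (k := 0) (n := m) (by simp)
        (by exact_mod_cast hm) ξ
    simp only [norm_iteratedFDeriv_zero, pow_zero, one_mul, zero_add, Finset.range_one,
      Finset.singleton_product, Finset.sum_map, Function.Embedding.coeFn_mk, Nat.cast_zero,
      mul_zero] at h
    refine h.trans ?_
    have hs : ∑ j ∈ Finset.range (m + 1), ∫ t, ‖iteratedFDeriv ℝ j f t‖ ≤
        (m + 1) * (2 ^ k * A * B * E * J) := by
      refine (Finset.sum_le_card_nsmul _ _ (2 ^ k * A * B * E * J) ?_).trans (by simp)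
      intro j hj
      exact hI j (by have := Finset.mem_range.1 hj; omega)
    have hmk : (m : ℝ) ≤ k := by exact_mod_cast hm
    have h4 : (2 : ℝ) ^ m ≤ 2 ^ k := pow_le_pow_right₀ (by norm_num) hm
    calc _ ≤ (2 : ℝ) ^ m * ((m + 1) * (2 ^ k * A * B * E * J)) :=
          mul_le_mul_of_nonneg_left hs (by positivity)
      _ ≤ _ := by gcongr
  rw [le_div_iff₀ (by positivity)]
  have h0 := key 0 (Nat.zero_le _)
  have h1 := key k le_rfl
  have hp : (1 + ‖ξ‖) ^ k ≤ 2 ^ k * (1 + ‖ξ‖ ^ k) := by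
    refine (add_pow_le zero_le_one (norm_nonneg ξ) k).trans ?_
    rw [one_pow]
    gcongr
    · norm_num
    · omega
  calc _ ≤ ‖FourierTransform.fourier f ξ‖ * (2 ^ k * (1 + ‖ξ‖ ^ k)) :=
        mul_le_mul_of_nonneg_left hp (norm_nonneg _)
    _ = 2 ^ k * (‖ξ‖ ^ 0 * ‖FourierTransform.fourier f ξ‖ +
        ‖ξ‖ ^ k * ‖FourierTransform.fourier f ξ‖) := by ring
    _ ≤ 2 ^ k * (2 ^ k * ((k + 1) * (2 ^ k * A * B * E * J)) +
        2 ^ k * ((k + 1) * (2 ^ k * A * B * E * J))) := by gcongr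
    _ = _ := by ring
end
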